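/- Let (U,V) and (V,U) be cotorsion pairs in T with C := U ∩ V. Assume the quotient category T/V is abelian and that U contains a nonzero object having no nonzero direct summand in C. Then for every indecomposable object K of U not lying in C, both K[-1] and K[1] are indecomposable objects of U not lying in C. -/

import Mathlib

/-!
The theorem rests on the functor `quotShift V : T ⥤ T/V`, `X ↦ X[-1]`. Since `Hom(U, V[1]) = 0`, it
is faithful on morphisms out of objects of `U` (`quotShift_faithful`), and these objects become
projective with lifts that can be chosen in `T` itself (`quotShift_lift_epi`). Cokernels and images
of the abelian category `T/V` can therefore be used to lift morphisms of `T`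
(`quotShift_lift_of_cokernel`).

*Negative shift* (`shift_neg_one_mem`). Take a triangle `L → C₀ → K → L[1]` with `L ∈ U` and
`C₀ ∈ V`; by closure under extensions `C₀ ∈ U ∩ V`. Let `p₀ : C₀ → X` represent the cokernel of the
image of `i : L → C₀`. In `T/V` the object `X` is a quotient of `C₀`, hence its right
`U`-approximation `U₀ → X` and `p₀` factor through each other. Comparing the two factorizations
yields `1_L = (a map through V) + (a map through K[-1])` (`id_decomp`). Now `L ∉ V`, as otherwise `K`
would be a summand of `C₀`. Because `K[-1]` has local endomorphism ring, either the composite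
`K[-1] → L → K[-1]` is invertible and `K[-1]` is a summand of `L`, or `L` is a summand of an object
of `V`, which is impossible. So `K[-1] ∈ U`; if it were in `V`, then `1_L` would factor through `V`.

*Positive shift.* Take a triangle `K → C₀ → M → K[1]` with `C₀ ∈ V` and `M ∈ U`. As `K ∉ V`, the
object `M` has an indecomposable summand `N ∉ V`. By the previous part `N[-1] ∈ U`, so
`Hom(C₀, N) = 0` because `(V, U)` is a cotorsion pair. The projection `M → N` thus factors through
`M → K[1]`, and `N` is a summand of the indecomposable object `K[1]`. Hence `K[1] ≅ N`.
-/

open CategoryTheory CategoryTheory.Limits CategoryTheory.Pretriangulated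

attribute [local instance] CategoryTheory.Limits.hasBinaryBiproducts_of_finite_biproducts

universe v u

namespace ClusterPaper

variable {T : Type u} [Category.{v} T] [Preadditive T] [HasZeroObject T]
  [HasShift T ℤ] [∀ n : ℤ, (shiftFunctor T n).Additive] [Pretriangulated T]
  [HasFiniteBiproducts T]

/-- `X` is a direct summand of `Z`. -/
def IsSummand (X Z : T) : Prop :=
  ∃ (s : X ⟶ Z) (r : Z ⟶ X), s ≫ r = 𝟙 X

/-- The category is Krull–Schmidt: every object is a finite direct sum of objects
whose endomorphism rings are local. -/
def IsKrullSchmidt : Prop :=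
  ∀ X : T, ∃ (n : ℕ) (f : Fin n → T),
    Nonempty (X ≅ ⨁ f) ∧ ∀ i, IsLocalRing (End (f i))

/-- A class of objects is closed under isomorphisms. -/
def IsoClosed (P : T → Prop) : Prop := ∀ ⦃X Y : T⦄, (X ≅ Y) → P X → P Y

/-- A class of objects is closed under finite direct sums. -/
def SumClosed (P : T → Prop) : Prop :=
  ∀ ⦃X Y : T⦄, P X → P Y → P (X ⊞ Y)

/-- A class of objects is closed under direct summands. -/
def SummandClosed (P : T → Prop) : Prop := ∀ ⦃X Z : T⦄, IsSummand X Z → P Z → P X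

/-- `Hom(X, Y[1]) = 0`, i.e. `E(X,Y) = 0` for the extriangulated structure on a
triangulated category. -/
def Ext1Zero (X Y : T) : Prop := ∀ f : X ⟶ Y⟦(1 : ℤ)⟧, f = 0

/-- The right perpendicular category `P^⊥1`. -/
def rightPerp (P : T → Prop) : T → Prop := fun X => ∀ ⦃C : T⦄, P C → Ext1Zero C X

/-- The left perpendicular category `^⊥1 P`. -/
def leftPerp (P : T → Prop) : T → Prop := fun X => ∀ ⦃C : T⦄, P C → Ext1Zero X C

/-- A cotorsion pair `(U, V)`. -/
structure CotorsionPair (U V : T → Prop) : Prop where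
  summandClosed_fst : SummandClosed U
  summandClosed_snd : SummandClosed V
  ext_zero : ∀ ⦃X Y : T⦄, U X → V Y → Ext1Zero X Y
  tri_left : ∀ B : T, ∃ (VB UB : T) (f : VB ⟶ UB) (g : UB ⟶ B) (h : B ⟶ VB⟦(1 : ℤ)⟧),
    V VB ∧ U UB ∧ Triangle.mk f g h ∈ distTriang T
  tri_right : ∀ B : T, ∃ (VB UB : T) (f : B ⟶ VB) (g : VB ⟶ UB) (h : UB ⟶ B⟦(1 : ℤ)⟧),
    V VB ∧ U UB ∧ Triangle.mk f g h ∈ distTriang T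

/-- `f : C₀ ⟶ X` is a right `P`-approximation of `X`. -/
def IsRightApprox (P : T → Prop) {C₀ X : T} (f : C₀ ⟶ X) : Prop :=
  ∀ ⦃C' : T⦄, P C' → ∀ g : C' ⟶ X, ∃ h : C' ⟶ C₀, h ≫ f = g

/-- `f : X ⟶ C₀` is a left `P`-approximation of `X`. -/
def IsLeftApprox (P : T → Prop) {X C₀ : T} (f : X ⟶ C₀) : Prop :=
  ∀ ⦃C' : T⦄, P C' → ∀ g : X ⟶ C', ∃ h : C₀ ⟶ C', f ≫ h = g

/-- Every object admits a right `P`-approximation. -/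
def ContravariantlyFinite (P : T → Prop) : Prop :=
  ∀ X : T, ∃ (C₀ : T) (f : C₀ ⟶ X), P C₀ ∧ IsRightApprox P f

/-- Every object admits a left `P`-approximation. -/
def CovariantlyFinite (P : T → Prop) : Prop :=
  ∀ X : T, ∃ (C₀ : T) (f : X ⟶ C₀), P C₀ ∧ IsLeftApprox P f

/-- A pre-cluster tilting subcategory. -/
structure PreClusterTilting (C : T → Prop) : Prop where
  sumClosed : SumClosed C
  summandClosed : SummandClosed C
  rigid : ∀ ⦃X Y : T⦄, C X → C Y → Ext1Zero X Y
  contravariantlyFinite : ContravariantlyFinite C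
  covariantlyFinite : CovariantlyFinite C
  perp_eq : rightPerp C = leftPerp C

/-- A cluster tilting subcategory. -/
structure ClusterTilting (C : T → Prop) extends PreClusterTilting C : Prop where
  eq_rightPerp : C = rightPerp C
  eq_leftPerp : C = leftPerp C

/-- `f` factors through an object of `D`. -/
def FactorsThru (D : T → Prop) {X Y : T} (f : X ⟶ Y) : Prop :=
  ∃ (Z : T) (g : X ⟶ Z) (h : Z ⟶ Y), D Z ∧ g ≫ h = f

/-- The hom relation identifying two morphisms whose difference factors through `D`. -/
def quotRel (D : T → Prop) : HomRel T := fun {X Y} f g => FactorsThru D (f - g)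

/-- The additive quotient category `T/D`. -/
abbrev QuotCat (D : T → Prop) := CategoryTheory.Quotient (quotRel D)

/-- A category is abelian (as a property): it admits an abelian structure. -/
def IsAbelian (A : Type*) [Category A] : Prop := Nonempty (Abelian A)

/-- An object is indecomposable: it is nonzero, and in any direct sum
decomposition one summand is zero. -/
def Indec (X : T) : Prop :=
  ¬ IsZero X ∧ ∀ (Y Z : T), (X ≅ Y ⊞ Z) → IsZero Y ∨ IsZero Z

/-- `X ∈ CoCone(P, Q)`: there is a triangle `X → B → C' → X[1]` with `B ∈ P`, `C' ∈ Q`. -/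
def CoCone (P Q : T → Prop) : T → Prop := fun X =>
  ∃ (B C' : T) (f : X ⟶ B) (g : B ⟶ C') (h : C' ⟶ X⟦(1 : ℤ)⟧),
    P B ∧ Q C' ∧ Triangle.mk f g h ∈ distTriang T

/-- `Y ∈ Cone(P, Q)`: there is a triangle `A → B → Y → A[1]` with `A ∈ P`, `B ∈ Q`. -/
def Cone (P Q : T → Prop) : T → Prop := fun Y =>
  ∃ (A B : T) (f : A ⟶ B) (g : B ⟶ Y) (h : Y ⟶ A⟦(1 : ℤ)⟧),
    P A ∧ Q B ∧ Triangle.mk f g h ∈ distTriang T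

/-- `U + V`: objects isomorphic to a direct sum of an object of `U` and an object of `V`. -/
def plusCat (U V : T → Prop) : T → Prop := fun X =>
  ∃ (A B : T), U A ∧ V B ∧ Nonempty (X ≅ A ⊞ B)

/-- A class of objects is closed under extensions. -/
def ExtClosed (P : T → Prop) : Prop :=
  ∀ ⦃A B C' : T⦄ (f : A ⟶ B) (g : B ⟶ C') (h : C' ⟶ A⟦(1 : ℤ)⟧),
    (Triangle.mk f g h ∈ distTriang T) → P A → P C' → P B

/-- The triangulated category `T` is connected: it is not the direct sum of two
nonzero triangulated (iso-closed, summand-closed, extension-closed, mutually Hom-orthogonal)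
subcategories. -/
def ConnectedCat : Prop :=
  ¬ ∃ (T₁ T₂ : T → Prop),
    IsoClosed T₁ ∧ IsoClosed T₂ ∧ SummandClosed T₁ ∧ SummandClosed T₂ ∧
    ExtClosed T₁ ∧ ExtClosed T₂ ∧
    (∃ X, T₁ X ∧ ¬ IsZero X) ∧ (∃ X, T₂ X ∧ ¬ IsZero X) ∧
    (∀ X : T, ∃ (A B : T), T₁ A ∧ T₂ B ∧ Nonempty (X ≅ A ⊞ B)) ∧
    (∀ ⦃X Y : T⦄, T₁ X → T₂ Y → ∀ f : X ⟶ Y, f = 0) ∧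
    (∀ ⦃X Y : T⦄, T₂ X → T₁ Y → ∀ f : X ⟶ Y, f = 0)

/-! ### Exactness of distinguished triangles -/

section Exact

variable {A B C X : T} {f : A ⟶ B} {g : B ⟶ C} {w : C ⟶ A⟦(1 : ℤ)⟧}

lemma tri_lift₂ (hT : Triangle.mk f g w ∈ distTriang T) (t : X ⟶ B) (ht : t ≫ g = 0) :
    ∃ s : X ⟶ A, t = s ≫ f :=
  Triangle.coyoneda_exact₂ _ hT t ht

lemma tri_lift₃ (hT : Triangle.mk f g w ∈ distTriang T) (t : X ⟶ C) (ht : t ≫ w = 0) :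
    ∃ s : X ⟶ B, t = s ≫ g :=
  Triangle.coyoneda_exact₃ _ hT t ht

/-- Exactness of `Hom(X, -)` on the shift of a distinguished triangle; the signs introduced by the
rotations are absorbed. -/
lemma tri_lift_shift (hT : Triangle.mk f g w ∈ distTriang T) (t : X ⟶ B⟦(1 : ℤ)⟧)
    (ht : t ≫ g⟦(1 : ℤ)⟧' = 0) : ∃ s : X ⟶ A⟦(1 : ℤ)⟧, t = s ≫ f⟦(1 : ℤ)⟧' := by
  have ht' : t ≫ (-g⟦(1 : ℤ)⟧') = 0 := by rw [Preadditive.comp_neg, ht, neg_zero]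
  obtain ⟨s, hs⟩ := Triangle.coyoneda_exact₂ _
    (rot_of_distTriang _ (rot_of_distTriang _ (rot_of_distTriang _ hT))) t ht'
  change X ⟶ A⟦(1 : ℤ)⟧ at s
  change t = s ≫ (-f⟦(1 : ℤ)⟧') at hs
  exact ⟨-s, by rw [hs, Preadditive.comp_neg, Preadditive.neg_comp]⟩

lemma tri_lift₁ (hT : Triangle.mk f g w ∈ distTriang T) (t : X ⟶ A) (ht : t ≫ f = 0) :
    ∃ (x : X ⟶ C⟦(-1 : ℤ)⟧) (y : C⟦(-1 : ℤ)⟧ ⟶ A), t = x ≫ y := by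
  obtain ⟨s, hs⟩ := Triangle.coyoneda_exact₂ _ (inv_rot_of_distTriang _ hT) t ht
  exact ⟨s, _, hs⟩

lemma tri_desc₂ (hT : Triangle.mk f g w ∈ distTriang T) (t : B ⟶ X) (ht : f ≫ t = 0) :
    ∃ s : C ⟶ X, t = g ≫ s :=
  Triangle.yoneda_exact₂ _ hT t ht

lemma tri_desc₃ (hT : Triangle.mk f g w ∈ distTriang T) (t : C ⟶ X) (ht : g ≫ t = 0) :
    ∃ s : A⟦(1 : ℤ)⟧ ⟶ X, t = w ≫ s :=
  Triangle.yoneda_exact₃ _ hT t ht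

/-- The first morphism of a distinguished triangle with zero connecting morphism is a split
monomorphism. -/
lemma isSummand_of_mor₃_eq_zero (hT : Triangle.mk f g w ∈ distTriang T) (hw : w = 0) :
    IsSummand A B := by
  subst hw
  obtain ⟨e, he, -⟩ := exists_iso_binaryBiproduct_of_distTriang _ hT rfl
  change f ≫ e.hom = biprod.inl at he
  exact ⟨f, e.hom ≫ biprod.fst, (Category.assoc _ _ _).symm.trans (by
    rw [he]; exact biprod.inl_fst)⟩

end Exact

/-! ### Summands and indecomposable objects -/

/-- In a triangulated category a retract of an indecomposable object splits off as a biproduct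
factor, so a nonzero one is the whole object. -/
lemma IsSummand.iso_of_indec {X Z : T} (h : IsSummand X Z) (hX : ¬ IsZero X) (hZ : Indec Z) :
    Nonempty (Z ≅ X) := by
  obtain ⟨s, r, hsr⟩ := h
  obtain ⟨W, g, w, hT⟩ := distinguished_cocone_triangle s
  have : Mono s := mono_of_mono_fac hsr
  have hw : w = 0 := (Triangle.mor₃_eq_zero_iff_mono₁ _ hT).2 this
  obtain ⟨e, -, -⟩ := exists_iso_binaryBiproduct_of_distTriang _ hT hw
  rcases hZ.2 X W e with h | h
  · exact (hX h).elim
  · exact ⟨e ≪≫ (isoBiprodZero h).symm⟩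

lemma not_isZero_of_isLocalRing {X : T} (h : IsLocalRing (End X)) : ¬ IsZero X := fun h0 =>
  one_ne_zero (α := End X) (h0.eq_of_src _ _)

lemma isIso_or_of_isLocalRing {X : T} (h : IsLocalRing (End X)) (κ : X ⟶ X) :
    IsIso κ ∨ IsIso (𝟙 X - κ) := by
  rw [← isUnit_iff_isIso (X := X), ← isUnit_iff_isIso (X := X)]
  exact IsLocalRing.isUnit_or_isUnit_of_add_one (R := End X) (add_sub_cancel κ (𝟙 X))

/-- Indecomposable objects of a Krull–Schmidt category have local endomorphism rings, in the form
used below. -/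
lemma Indec.isIso_or {K : T} (hKS : IsKrullSchmidt (T := T)) (hK : Indec K) (κ : K ⟶ K) :
    IsIso κ ∨ IsIso (𝟙 K - κ) := by
  obtain ⟨n, f, ⟨e⟩, hf⟩ := hKS K
  obtain _ | m := n
  · refine (hK.1 ?_).elim
    rw [IsZero.iff_id_eq_zero, ← cancel_mono e.hom]
    ext j
    exact j.elim0
  · have hs : IsSummand (f 0) K :=
      ⟨biproduct.ι f 0 ≫ e.inv, e.hom ≫ biproduct.π f 0, by simp⟩
    obtain ⟨e'⟩ := hs.iso_of_indec (not_isZero_of_isLocalRing (hf 0)) hK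
    refine (isIso_or_of_isLocalRing (hf 0) (e'.inv ≫ κ ≫ e'.hom)).imp (fun h => ?_) (fun h => ?_)
    · have h1 : κ = e'.hom ≫ (e'.inv ≫ κ ≫ e'.hom) ≫ e'.inv := by simp
      rw [h1]
      exact IsIso.comp_isIso' inferInstance (IsIso.comp_isIso' h inferInstance)
    · have h1 : 𝟙 K - κ = e'.hom ≫ (𝟙 _ - e'.inv ≫ κ ≫ e'.hom) ≫ e'.inv := by simp
      rw [h1]
      exact IsIso.comp_isIso' inferInstance (IsIso.comp_isIso' h inferInstance)

lemma Indec.shift {K : T} (hK : Indec K) (n : ℤ) : Indec (K⟦n⟧) := by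
  have key : ∀ (X : T) (m : ℤ), IsZero (X⟦m⟧) → IsZero X := fun X m h =>
    ((shiftFunctor T (-m)).map_isZero h).of_iso (shiftShiftNeg X m).symm
  refine ⟨fun h => hK.1 (key _ _ h), fun Y Z e => ?_⟩
  have := preservesBinaryBiproducts_of_preservesBiproducts (shiftFunctor T (-n))
  have e' : K ≅ (Y⟦-n⟧) ⊞ (Z⟦-n⟧) :=
    (shiftShiftNeg K n).symm ≪≫ (shiftFunctor T (-n)).mapIso e ≪≫
      (shiftFunctor T (-n)).mapBiprod Y Z
  exact (hK.2 _ _ e').imp (key _ _) (key _ _)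

/-! ### Cotorsion pairs -/

section Cotorsion

variable {U V : T → Prop}

lemma CotorsionPair.fst_of_ext (h : CotorsionPair U V) {B : T}
    (hB : ∀ Y, V Y → Ext1Zero B Y) : U B := by
  obtain ⟨Y, X, f, g, w, hY, hX, hT⟩ := h.tri_left B
  obtain ⟨s, hs⟩ := tri_lift₃ hT (𝟙 B) ((Category.id_comp _).trans (hB Y hY w))
  exact h.summandClosed_fst ⟨s, g, hs.symm⟩ hX

lemma CotorsionPair.snd_of_ext (h : CotorsionPair U V) {B : T}
    (hB : ∀ X, U X → Ext1Zero X B) : V B := by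
  obtain ⟨Y, X, f, g, w, hY, hX, hT⟩ := h.tri_right B
  have hw : w = 0 := hB X hX w
  exact h.summandClosed_snd (isSummand_of_mor₃_eq_zero hT hw) hY

lemma CotorsionPair.fst_ext (h : CotorsionPair U V) {A B C : T} {f : A ⟶ B} {g : B ⟶ C}
    {w : C ⟶ A⟦(1 : ℤ)⟧} (hT : Triangle.mk f g w ∈ distTriang T) (hA : U A) (hC : U C) : U B := by
  refine h.fst_of_ext fun Y hY t => ?_
  obtain ⟨t', ht⟩ := tri_desc₂ hT t (h.ext_zero hA hY _)
  have : t' = 0 := h.ext_zero hC hY t'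
  rw [ht, this, comp_zero]

lemma CotorsionPair.snd_ext (h : CotorsionPair U V) {A B C : T} {f : A ⟶ B} {g : B ⟶ C}
    {w : C ⟶ A⟦(1 : ℤ)⟧} (hT : Triangle.mk f g w ∈ distTriang T) (hA : V A) (hC : V C) : V B := by
  refine h.snd_of_ext fun X hX t => ?_
  obtain ⟨t', ht⟩ := tri_lift_shift hT t (h.ext_zero hX hC _)
  have : t' = 0 := h.ext_zero hX hA t'
  rw [ht, this, zero_comp]

lemma CotorsionPair.snd_biproduct (h : CotorsionPair U V) {n : ℕ} (f : Fin n → T)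
    (hf : ∀ i, V (f i)) : V (⨁ f) := by
  refine h.snd_of_ext fun X hX t => ?_
  have hid : 𝟙 ((⨁ f)⟦(1 : ℤ)⟧) =
      ∑ i, (biproduct.π f i)⟦(1 : ℤ)⟧' ≫ (biproduct.ι f i)⟦(1 : ℤ)⟧' := by
    rw [← (shiftFunctor T (1 : ℤ)).map_id, ← biproduct.total, Functor.map_sum]
    simp
  rw [← Category.comp_id t, hid, Preadditive.comp_sum]
  refine Finset.sum_eq_zero fun i _ => ?_
  rw [← Category.assoc, h.ext_zero hX (hf i) (t ≫ (biproduct.π f i)⟦(1 : ℤ)⟧'), zero_comp]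

end Cotorsion

/-! ### The abelian quotient -/

lemma quotRel_congruence {U V : T → Prop} (hVsum : SumClosed V) (hUV : CotorsionPair U V) :
    Congruence (quotRel V) where
  equivalence := fun {X Y} => ⟨fun f => by
      obtain ⟨Z, -, -, -, -, hZ, -⟩ := hUV.tri_left X
      exact ⟨Z, 0, 0, hZ, by simp⟩,
    fun {f g} ⟨Z, a, b, hZ, h⟩ => ⟨Z, -a, b, hZ, by simp [h]⟩,
    fun {f g k} ⟨Z, a, b, hZ, h⟩ ⟨Z', a', b', hZ', h'⟩ =>
      ⟨Z ⊞ Z', biprod.lift a a', biprod.desc b b', hVsum hZ hZ', by simp [h, h']⟩⟩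
  comp_left := by
    rintro _ _ _ f _ _ ⟨Z, a, b, hZ, h⟩
    exact ⟨Z, f ≫ a, b, hZ, by simp [h]⟩
  comp_right := by
    rintro _ _ _ _ _ g ⟨Z, a, b, hZ, h⟩
    exact ⟨Z, a, b ≫ g, hZ, by rw [← Category.assoc, h, Preadditive.sub_comp]⟩

/-- The functor `T ⥤ T/V` sending `X` to the class of `X[-1]`. The shift turns the objects `X[-1]`
with `X ∈ U`, which behave as projectives of `T/V`, into the images of the objects of `U`. -/
def quotShift (V : T → Prop) : T ⥤ QuotCat V :=
  shiftFunctor T (-1 : ℤ) ⋙ Quotient.functor (quotRel V)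

instance (V : T → Prop) : (quotShift V).Full := by unfold quotShift; infer_instance

instance (V : T → Prop) : (quotShift V).EssSurj := by unfold quotShift; infer_instance

section Projective

variable {U V : T → Prop}

/-- Morphisms identified by `quotShift V` differ by a morphism factoring through `V[1]`. -/
lemma quotShift_factors (hVsum : SumClosed V) (hUV : CotorsionPair U V) {X Y : T} {f g : X ⟶ Y}
    (h : (quotShift V).map f = (quotShift V).map g) :
    ∃ (Z : T) (a : X ⟶ Z⟦(1 : ℤ)⟧) (b : Z⟦(1 : ℤ)⟧ ⟶ Y), V Z ∧ a ≫ b = f - g := by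
  have := quotRel_congruence hVsum hUV
  obtain ⟨Z, a, b, hZ, hab⟩ := (Quotient.functor_map_eq_iff (quotRel V) _ _).1 h
  refine ⟨Z, (shiftNegShift X (1 : ℤ)).inv ≫ a⟦(1 : ℤ)⟧',
    b⟦(1 : ℤ)⟧' ≫ (shiftNegShift Y (1 : ℤ)).hom, hZ, ?_⟩
  have h1 : a⟦(1 : ℤ)⟧' ≫ b⟦(1 : ℤ)⟧' = (f - g)⟦(-1 : ℤ)⟧'⟦(1 : ℤ)⟧' := by
    rw [← Functor.map_comp, hab, ← Functor.map_sub]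
  have h2 := (shiftEquiv T (1 : ℤ)).counitIso.hom.naturality (f - g)
  calc
    _ = (shiftNegShift X (1 : ℤ)).inv ≫ (a⟦(1 : ℤ)⟧' ≫ b⟦(1 : ℤ)⟧') ≫
        (shiftNegShift Y (1 : ℤ)).hom := by
        simp only [Category.assoc]
    _ = (shiftNegShift X (1 : ℤ)).inv ≫ (shiftNegShift X (1 : ℤ)).hom ≫ (f - g) := by
        rw [h1]; exact congrArg _ h2
    _ = f - g := by rw [Iso.inv_hom_id_assoc]

/-- The functor `quotShift V` is faithful on morphisms out of objects of `U`, because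
`Hom(U, V[1]) = 0`. -/
lemma quotShift_faithful (hVsum : SumClosed V) (hUV : CotorsionPair U V) {X Y : T} (hX : U X)
    {f g : X ⟶ Y} (h : (quotShift V).map f = (quotShift V).map g) : f = g := by
  obtain ⟨Z, a, b, hZ, hab⟩ := quotShift_factors hVsum hUV h
  have ha : a = 0 := hUV.ext_zero hX hZ a
  rw [← sub_eq_zero, ← hab, ha, zero_comp]

/-- Objects of `U` become projective in `T/V`, and the lifts can be chosen in `T`: the map from the
target of an epimorphism to its cone vanishes in `T/V`, so it kills maps out of `U`. -/
lemma quotShift_lift_epi [HasZeroMorphisms (QuotCat V)] (hVsum : SumClosed V)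
    (hUV : CotorsionPair U V) {X A B : T} (hX : U X)
    (g : A ⟶ B) [Epi ((quotShift V).map g)] (t : X ⟶ B) : ∃ s : X ⟶ A, s ≫ g = t := by
  obtain ⟨Z, z, w, hT⟩ := distinguished_cocone_triangle g
  have hgz : g ≫ z = 0 := comp_distTriang_mor_zero₁₂ _ hT
  have hz : (quotShift V).map z = (quotShift V).map 0 := by
    rw [← cancel_epi ((quotShift V).map g), ← Functor.map_comp, ← Functor.map_comp, hgz, comp_zero]
  have htz : t ≫ z = 0 := quotShift_faithful hVsum hUV hX (by
    rw [Functor.map_comp, hz, ← Functor.map_comp, comp_zero])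
  obtain ⟨s, hs⟩ := tri_lift₂ hT t htz
  exact ⟨s, hs.symm⟩

/-- A morphism out of an object of `U` that is killed by the cokernel of `f` in `T/V` factors
through `f` already in `T`. -/
lemma quotShift_lift_of_cokernel [Abelian (QuotCat V)] (hVsum : SumClosed V)
    (hUV : CotorsionPair U V) {X A B : T} (hX : U X) (f : A ⟶ B) (t : X ⟶ B)
    (ht : (quotShift V).map t ≫ cokernel.π ((quotShift V).map f) = 0) :
    ∃ s : X ⟶ A, s ≫ f = t := by
  let F := quotShift V
  let I := F.objPreimage (Abelian.image (F.map f))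
  let e : F.obj I ≅ Abelian.image (F.map f) := F.objObjPreimageIso _
  obtain ⟨q, hq⟩ := F.map_surjective (Abelian.factorThruImage (F.map f) ≫ e.inv)
  obtain ⟨t', ht'⟩ := F.map_surjective (kernel.lift _ (F.map t) ht ≫ e.inv)
  have : Epi (F.map q) := by rw [hq]; infer_instance
  obtain ⟨s, hs⟩ := quotShift_lift_epi hVsum hUV hX q t'
  refine ⟨s, quotShift_faithful hVsum hUV hX ?_⟩
  have hf : F.map q ≫ e.hom ≫ Abelian.image.ι (F.map f) = F.map f := by simp [hq]
  have ht2 : F.map t' ≫ e.hom ≫ Abelian.image.ι (F.map f) = F.map t := by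
    rw [ht', Category.assoc, Iso.inv_hom_id_assoc]
    exact kernel.lift_ι _ _ _
  change F.map (s ≫ f) = F.map t
  rw [Functor.map_comp, ← hf, ← Category.assoc, ← Functor.map_comp, hs, ht2]

end Projective

/-! ### The negative shift -/

section Shift

variable {U V : T → Prop}

/-- For a triangle `L → C₀ → K → L[1]` with `L ∈ U`, `C₀ ∈ U ∩ V`, the identity of `L` is the sum of
a morphism factoring through `V` and a morphism factoring through `K[-1]`. This is where the
existence of cokernels in `T/V` enters. -/
lemma id_decomp [Abelian (QuotCat V)] (hVsum : SumClosed V) (hUV : CotorsionPair U V)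
    {L C₀ K : T} {i : L ⟶ C₀} {p : C₀ ⟶ K} {h : K ⟶ L⟦(1 : ℤ)⟧}
    (hT : Triangle.mk i p h ∈ distTriang T) (hL : U L) (hC : U C₀) (hC' : V C₀) :
    ∃ (D : T) (d : L ⟶ D) (d' : D ⟶ L) (x : L ⟶ K⟦(-1 : ℤ)⟧) (y : K⟦(-1 : ℤ)⟧ ⟶ L),
      V D ∧ d ≫ d' + x ≫ y = 𝟙 L := by
  let F := quotShift V
  -- a morphism `p₀` of `T` representing the cokernel of `i` in `T/V`
  let X := F.objPreimage (cokernel (F.map i))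
  let e : F.obj X ≅ cokernel (F.map i) := F.objObjPreimageIso _
  obtain ⟨p₀, hp₀⟩ := F.map_surjective (cokernel.π (F.map i) ≫ e.inv)
  have : Epi (F.map p₀) := by rw [hp₀]; infer_instance
  have hπ : F.map p₀ ≫ e.hom = cokernel.π (F.map i) := by simp [hp₀]
  have hker : ∀ {Y : T} (_ : U Y) (t : Y ⟶ C₀), t ≫ p₀ = 0 → ∃ s : Y ⟶ L, s ≫ i = t := by
    intro Y hY t ht
    refine quotShift_lift_of_cokernel hVsum hUV hY i t ?_
    change F.map t ≫ cokernel.π (F.map i) = 0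
    rw [← hπ, ← Category.assoc, ← Functor.map_comp, ht, Functor.map_zero, zero_comp]
  have hip : i ≫ p₀ = 0 := quotShift_faithful hVsum hUV hL (by
    change F.map (i ≫ p₀) = F.map 0
    rw [Functor.map_comp, hp₀, cokernel.condition_assoc, zero_comp, Functor.map_zero])
  -- compare `p₀` with the right `U`-approximation `q` of `X`
  obtain ⟨V', U₀, j, q, δ, hV', hU₀, hT'⟩ := hUV.tri_left X
  obtain ⟨a, ha⟩ := tri_lift₃ hT' p₀ (hUV.ext_zero hC hV' _)
  obtain ⟨b, hb⟩ := quotShift_lift_epi hVsum hUV hU₀ p₀ q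
  have hjq : j ≫ q = 0 := comp_distTriang_mor_zero₁₂ _ hT'
  obtain ⟨l, hl⟩ := tri_lift₂ hT' (i ≫ a) (by
    rw [Category.assoc, ← ha, hip])
  -- replace `V'` by its `U`-approximation `C'`, which lies in `V`, to make the kernel property of
  -- `i` applicable
  obtain ⟨V'', C', m, k, δ', hV'', hUC', hT''⟩ := hUV.tri_left V'
  have hVC' : V C' := hUV.snd_ext hT'' hV'' hV'
  obtain ⟨α, hα⟩ := tri_lift₃ hT'' l (hUV.ext_zero hL hV'' _)
  obtain ⟨β, hβ⟩ := hker hUC' (k ≫ j ≫ b) (by simp [hb, hjq])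
  obtain ⟨γ, hγ⟩ := hker hC (a ≫ b - 𝟙 C₀) (by
    rw [Preadditive.sub_comp, Category.assoc, hb, ← ha, Category.id_comp, sub_self])
  have hzero : (𝟙 L - (α ≫ β - i ≫ γ)) ≫ i = 0 := by
    have h1 : (i ≫ a) ≫ b = α ≫ k ≫ j ≫ b := by rw [hl, hα]; simp only [Category.assoc]
    have h2 : i ≫ a ≫ b = i ≫ γ ≫ i + i := by rw [hγ]; simp
    rw [Category.assoc, h2, ← hβ] at h1
    simp only [Preadditive.sub_comp, Category.assoc, Category.id_comp]
    rw [← h1]; abel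
  obtain ⟨x, y, hx⟩ := tri_lift₁ hT _ hzero
  refine ⟨C' ⊞ C₀, biprod.lift α (-i), biprod.desc β γ, x, y, hVsum hVC' hC', ?_⟩
  rw [← hx, biprod.lift_desc, Preadditive.neg_comp]
  abel

/-- The negative shift preserves the objects of `U` outside `V` with local endomorphism ring, where
locality is expressed by `hloc`. -/
lemma shift_neg_one_mem [Abelian (QuotCat V)] (hVsum : SumClosed V) (hUV : CotorsionPair U V)
    (hVU : CotorsionPair V U) {K : T} (hK : U K)
    (hloc : ∀ κ : K ⟶ K, IsIso κ ∨ IsIso (𝟙 K - κ)) (hKV : ¬ V K) :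
    U (K⟦(-1 : ℤ)⟧) ∧ ¬ V (K⟦(-1 : ℤ)⟧) := by
  obtain ⟨L, C₀, i, p, h, hL, hC', hT⟩ := hVU.tri_left K
  have hC : U C₀ := hUV.fst_ext hT hL hK
  have hLV : ¬ V L := fun hLV => hKV (by
    obtain ⟨s, hs⟩ := tri_lift₃ hT (𝟙 K)
      ((Category.id_comp _).trans (hUV.ext_zero hK hLV h))
    exact hUV.summandClosed_snd ⟨s, p, hs.symm⟩ hC')
  obtain ⟨D, d, d', x, y, hD, hid⟩ := id_decomp hVsum hUV hT hL hC hC'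
  refine ⟨?_, fun hV => hLV ?_⟩
  · obtain ⟨κ, hκ⟩ := (shiftFunctor T (-1 : ℤ)).map_surjective (y ≫ x)
    rcases hloc κ with hu | hu
    · have : IsIso (y ≫ x) := by rw [← hκ]; infer_instance
      exact hUV.summandClosed_fst ⟨y, x ≫ inv (y ≫ x), by
        rw [← Category.assoc, IsIso.hom_inv_id]⟩ hL
    · -- if `1 - yx` is invertible, so is `1 - xy`, and then `L` is a summand of `D`
      have : IsIso (𝟙 _ - y ≫ x) := by
        have h1 : 𝟙 _ - y ≫ x = (shiftFunctor T (-1 : ℤ)).map (𝟙 K - κ) := by simp [hκ]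
        rw [h1]; infer_instance
      have hw : (𝟙 _ - y ≫ x) ≫ inv (𝟙 _ - y ≫ x) = 𝟙 _ := IsIso.hom_inv_id _
      generalize inv (𝟙 _ - y ≫ x) = w at hw
      refine (hLV (hUV.summandClosed_snd ⟨d, d' ≫ (𝟙 L + x ≫ w ≫ y), ?_⟩ hD)).elim
      have h2 : d ≫ d' = 𝟙 L - x ≫ y := by rw [← hid]; abel
      have h3 : x ≫ ((𝟙 _ - y ≫ x) ≫ w) ≫ y = x ≫ y := by rw [hw, Category.id_comp]
      rw [← Category.assoc, h2]
      simp only [Preadditive.sub_comp, Preadditive.comp_sub, Category.assoc,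
        Category.id_comp, Preadditive.comp_add, Category.comp_id] at h3 ⊢
      rw [← h3]; abel
  · exact hUV.summandClosed_snd ⟨biprod.lift d x, biprod.desc d' y, by simpa using hid⟩
      (hVsum hD hV)

end Shift

/-- Let `(U,V)`, `(V,U)` be cotorsion pairs with `C := U ∩ V`, suppose
`T/V` is abelian and `U` contains a nonzero object with no nonzero direct summand in `C`.
Then for any indecomposable `K ∈ U` not in `C`, both `K[-1]` and `K[1]` are
indecomposable objects of `U` not in `C`. -/
theorem stmt12 [IsTriangulated T] (hKS : IsKrullSchmidt (T := T))
    (U V : T → Prop) (hUiso : IsoClosed U) (hUsum : SumClosed U)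
    (hViso : IsoClosed V) (hVsum : SumClosed V)
    (hUV : CotorsionPair U V) (hVU : CotorsionPair V U)
    (hab : IsAbelian (QuotCat V))
    (hne : ∃ X : T, U X ∧ ¬ IsZero X ∧ ∀ Y : T, IsSummand Y X → (U Y ∧ V Y) → IsZero Y)
    {K : T} (hK : U K) (hind : Indec K) (hKC : ¬ (U K ∧ V K)) :
    (U (K⟦(-1 : ℤ)⟧) ∧ Indec (K⟦(-1 : ℤ)⟧) ∧ ¬ (U (K⟦(-1 : ℤ)⟧) ∧ V (K⟦(-1 : ℤ)⟧))) ∧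
    (U (K⟦(1 : ℤ)⟧) ∧ Indec (K⟦(1 : ℤ)⟧) ∧ ¬ (U (K⟦(1 : ℤ)⟧) ∧ V (K⟦(1 : ℤ)⟧))) := by
  obtain ⟨_⟩ := hab
  have hKV : ¬ V K := fun h => hKC ⟨hK, h⟩
  obtain ⟨h1, h2⟩ := shift_neg_one_mem hVsum hUV hVU hK (hind.isIso_or hKS) hKV
  refine ⟨⟨h1, hind.shift _, fun h => h2 h.2⟩, ?_⟩
  suffices h : U (K⟦(1 : ℤ)⟧) ∧ ¬ V (K⟦(1 : ℤ)⟧) from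
    ⟨h.1, hind.shift _, fun h' => h.2 h'.2⟩
  obtain ⟨C₀, M, i, p, w, hC, hM, hT⟩ := hUV.tri_right K
  have hMV : ¬ V M := fun hMV => hKV (hUV.summandClosed_snd
    (isSummand_of_mor₃_eq_zero hT (hVU.ext_zero hMV hK w)) hC)
  obtain ⟨n, f, ⟨e⟩, hf⟩ := hKS M
  obtain ⟨k, hk⟩ : ∃ k, ¬ V (f k) := by
    by_contra! hall
    exact hMV (hViso e.symm (hUV.snd_biproduct f hall))
  let s : f k ⟶ M := biproduct.ι f k ≫ e.inv
  let r : M ⟶ f k := e.hom ≫ biproduct.π f k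
  have hsr : s ≫ r = 𝟙 _ := by simp [s, r]
  have hUk : U (f k) := hUV.summandClosed_fst ⟨s, r, hsr⟩ hM
  -- `f k` is the shift of an object of `U`, so it receives no nonzero map from `C₀`
  have hpr : p ≫ r = 0 := by
    have h3 := hVU.ext_zero hC (shift_neg_one_mem hVsum hUV hVU hUk
      (isIso_or_of_isLocalRing (hf k)) hk).1
      ((p ≫ r) ≫ (shiftNegShift (f k) (1 : ℤ)).inv)
    rw [← cancel_mono (shiftNegShift (f k) (1 : ℤ)).inv, h3, zero_comp]
  obtain ⟨r', hr'⟩ := tri_desc₃ hT r hpr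
  have hs : IsSummand (f k) (K⟦(1 : ℤ)⟧) := ⟨s ≫ w, r', by
    rw [Category.assoc, ← hsr]; exact congrArg _ hr'.symm⟩
  obtain ⟨e'⟩ := hs.iso_of_indec (not_isZero_of_isLocalRing (hf k)) (hind.shift 1)
  exact ⟨hUiso e'.symm hUk, fun h => hk (hViso e' h)⟩

end ClusterPaper
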